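/- arXiv:1904.00854 — 2 statements merged into one kernel-verified Lean document; each statement's English description precedes it below -/
import Mathlib

section
/- Let (Y,σ) be an infinite r-automatic shift generated by (θ,τ) with θ primitive. Then for every n ≥ 0, every cyclic σ^{rⁿ}-minimal partition of Y has exactly rⁿ elements; that is, γ(rⁿ) = rⁿ. -/
open scoped Classical

noncomputable section

/-- The product topology on `ℤ → A`, where the alphabet `A` carries the discrete topology. -/
abbrev seqTop (A : Type*) : TopologicalSpace (ℤ → A) :=
  @Pi.topologicalSpace ℤ (fun _ => A) (fun _ => ⊥)

/-- The left shift map `σ`. -/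
def shiftMap {A : Type*} (x : ℤ → A) : ℤ → A := fun n => x (n + 1)

/-- The shift by `m` steps, i.e. `σ ^ m`. -/
def shiftBy {A : Type*} (m : ℤ) (x : ℤ → A) : ℤ → A := fun n => x (n + m)

/-- The coordinatewise extension of a letter-to-letter map. -/
def codeMap {A B : Type*} (τ : A → B) : (ℤ → A) → (ℤ → B) := fun x n => τ (x n)

/-- The closure of the two-sided shift orbit of `x`. -/
def orbitClosure {A : Type*} (x : ℤ → A) : Set (ℤ → A) :=
  @closure _ (seqTop A) (Set.range fun m : ℤ => shiftBy m x)

/-- A subshift: a nonempty, closed, shift-invariant subset of `ℤ → A`. -/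
def IsSubshift {A : Type*} (X : Set (ℤ → A)) : Prop :=
  X.Nonempty ∧ @IsClosed _ (seqTop A) X ∧ shiftMap '' X = X

/-- A minimal subshift: every orbit is dense. -/
def IsMinimalSubshift {A : Type*} (X : Set (ℤ → A)) : Prop :=
  IsSubshift X ∧ ∀ x ∈ X, X ⊆ orbitClosure x

/-- `substPow θ r k a j` is the `(j+1)`-st letter of `θ^k(a)`, meaningful for `j < r ^ k`. -/
def substPow {A : Type*} (θ : A → ℕ → A) (r : ℕ) : ℕ → A → ℕ → A
  | 0, a, _ => a
  | k + 1, a, j => θ (substPow θ r k a (j / r)) (j % r)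

/-- A substitution of constant length `r` is primitive if for some `k ≥ 1` every letter
occurs in every `θ^k(a)`. -/
def SubstPrimitive {A : Type*} (θ : A → ℕ → A) (r : ℕ) : Prop :=
  ∃ k, 1 ≤ k ∧ ∀ a a' : A, ∃ j < r ^ k, substPow θ r k a j = a'

/-- The action of `θ^k` on bi-infinite sequences, with the image of `x₀` beginning at
coordinate `0`. -/
def substActPow {A : Type*} (θ : A → ℕ → A) (r k : ℕ) (x : ℤ → A) : ℤ → A :=
  fun n => substPow θ r k (x (Int.fdiv n (r ^ k))) ((Int.fmod n (r ^ k)).toNat)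

/-- A bi-infinite `θ`-periodic point. -/
def IsSubstPeriodicPt {A : Type*} (θ : A → ℕ → A) (r : ℕ) (x : ℤ → A) : Prop :=
  ∃ j, 1 ≤ j ∧ substActPow θ r j x = x

/-- `X` is the substitution shift `X_θ`: the orbit closure of a bi-infinite `θ`-periodic
point. -/
def IsSubstShift {A : Type*} (θ : A → ℕ → A) (r : ℕ) (X : Set (ℤ → A)) : Prop :=
  ∃ x : ℤ → A, IsSubstPeriodicPt θ r x ∧ X = orbitClosure x

/-- An automorphism of the subshift `X`: a self-homeomorphism of `X` commuting with the
shift. -/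
def IsAut {A : Type*} (X : Set (ℤ → A)) (Φ : (ℤ → A) → (ℤ → A)) : Prop :=
  Set.BijOn Φ X X ∧ @ContinuousOn _ _ (seqTop A) (seqTop A) Φ X ∧
    (∀ x ∈ X, Φ (shiftMap x) = shiftMap (Φ x)) ∧
    ∃ Ψ : (ℤ → A) → (ℤ → A), Set.MapsTo Ψ X X ∧
      @ContinuousOn _ _ (seqTop A) (seqTop A) Ψ X ∧ ∀ x ∈ X, Ψ (Φ x) = x

/-- A topological conjugacy between the subshifts `X` and `Y`. -/
def IsConjugacy {A B : Type*} (X : Set (ℤ → A)) (Y : Set (ℤ → B))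
    (h : (ℤ → A) → (ℤ → B)) : Prop :=
  Set.BijOn h X Y ∧ @ContinuousOn _ _ (seqTop A) (seqTop B) h X ∧
    (∀ x ∈ X, h (shiftMap x) = shiftMap (h x)) ∧
    ∃ g : (ℤ → B) → (ℤ → A), Set.MapsTo g Y X ∧
      @ContinuousOn _ _ (seqTop B) (seqTop A) g Y ∧ ∀ x ∈ X, g (h x) = x

/-- `X` and `Y` are topologically conjugate subshifts. -/
def TopConjugate {A B : Type*} (X : Set (ℤ → A)) (Y : Set (ℤ → B)) : Prop :=
  ∃ h, IsConjugacy X Y h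

/-- `(P, σ^n)` is a minimal system: `P` is nonempty, `σ^n`-invariant (in both directions)
and every `σ^n`-orbit is dense in `P`. -/
def MinimalUnderPow {A : Type*} (n : ℕ) (P : Set (ℤ → A)) : Prop :=
  P.Nonempty ∧ (∀ y ∈ P, ∀ m : ℤ, shiftBy ((n : ℤ) * m) y ∈ P) ∧
    ∀ y ∈ P, P ⊆ @closure _ (seqTop A) (Set.range fun m : ℤ => shiftBy ((n : ℤ) * m) y)

/-- A cyclic `σ^n`-minimal partition of `X` with `m` members. -/
def IsCyclicMinPartition {A : Type*} (X : Set (ℤ → A)) (n m : ℕ)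
    (P : ZMod m → Set (ℤ → A)) : Prop :=
  0 < m ∧ (∀ i, @IsClosed _ (seqTop A) (P i)) ∧
    (Pairwise fun i j => Disjoint (P i) (P j)) ∧ (⋃ i, P i) = X ∧
    (∀ i, shiftMap '' P i = P (i + 1)) ∧ ∀ i, MinimalUnderPow n (P i)

/-- `Φ` has `κ`-value zero: it fixes each member of every cyclic `σ^n`-minimal
partition of `X`. -/
def KappaZero {A : Type*} (X : Set (ℤ → A)) (Φ : (ℤ → A) → (ℤ → A)) : Prop :=
  ∀ n : ℕ, 1 ≤ n → ∀ m : ℕ, ∀ P : ZMod m → Set (ℤ → A),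
    IsCyclicMinPartition X n m P → ∀ i, Φ '' P i = P i

/-- `(a, b)` is a periodic pair for `θ`. -/
def IsPeriodicPair {A : Type*} (θ : A → ℕ → A) (r : ℕ) (a b : A) : Prop :=
  a ≠ b ∧ ∃ p, 1 ≤ p ∧ ∃ j < r ^ p, substPow θ r p a j = a ∧ substPow θ r p b j = b

/-- The least period `p(a,b)` of a periodic pair. -/
def pairPeriod {A : Type*} (θ : A → ℕ → A) (r : ℕ) (a b : A) : ℕ :=
  sInf {p | 1 ≤ p ∧ ∃ j < r ^ p, substPow θ r p a j = a ∧ substPow θ r p b j = b}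

/-- `p(θ)`: the least common multiple of the periods of the periodic pairs of `θ`
(equal to `1` if there are none). -/
def substPairLcm {A : Type*} [Fintype A] (θ : A → ℕ → A) (r : ℕ) : ℕ :=
  Finset.univ.lcm fun ab : A × A =>
    if IsPeriodicPair θ r ab.1 ab.2 then pairPeriod θ r ab.1 ab.2 else 1

/-- `θ` is pair-aperiodic: every periodic pair has period `1`. -/
def PairAperiodic {A : Type*} (θ : A → ℕ → A) (r : ℕ) : Prop :=
  ∀ a b : A, IsPeriodicPair θ r a b → ∃ j < r, θ a j = a ∧ θ b j = b

/-- `(c, d)` is `k`-reachable from `(a, b)`. -/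
def PairReachable {A : Type*} (θ : A → ℕ → A) (r k : ℕ) (a b c d : A) : Prop :=
  ∃ j < r ^ k, substPow θ r k a j = c ∧ substPow θ r k b j = d

/-- `(a, b)` is an asymptotic disjoint pair. -/
def AsympDisjointPair {A : Type*} (θ : A → ℕ → A) (r : ℕ) (a b : A) : Prop :=
  ∀ k, 1 ≤ k → ∃ j < r ^ k, substPow θ r k a j ≠ substPow θ r k b j

/-- A right-infinite fixed point of `θ`. -/
def IsRightFixed {A : Type*} (θ : A → ℕ → A) (r : ℕ) (u : ℕ → A) : Prop :=
  ∀ n : ℕ, θ (u (n / r)) (n % r) = u n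

/-- A left-infinite fixed point of `θ` (only coordinates `< 0` are meaningful). -/
def IsLeftFixed {A : Type*} (θ : A → ℕ → A) (r : ℕ) (v : ℤ → A) : Prop :=
  ∀ m : ℤ, m < 0 → θ (v (Int.fdiv m r)) ((Int.fmod m r).toNat) = v m

/-- `θ` is injective: distinct letters have distinct images. -/
def SubstInjective {A : Type*} (θ : A → ℕ → A) (r : ℕ) : Prop :=
  ∀ a b : A, (∀ j < r, θ a j = θ b j) → a = b

/-- `θ` is strongly injective: injective, no two distinct right-infinite fixed points agree
on all coordinates `n ≥ 1`, and no two distinct left-infinite fixed points agree on all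
coordinates `n ≤ -2`. -/
def StronglyInjective {A : Type*} (θ : A → ℕ → A) (r : ℕ) : Prop :=
  SubstInjective θ r ∧
    (∀ u u' : ℕ → A, IsRightFixed θ r u → IsRightFixed θ r u' →
      (∀ n, 1 ≤ n → u n = u' n) → u = u') ∧
    (∀ v v' : ℤ → A, IsLeftFixed θ r v → IsLeftFixed θ r v' →
      (∀ m : ℤ, m ≤ -2 → v m = v' m) → ∀ m : ℤ, m < 0 → v m = v' m)

/-- `θ` has height one. -/
def HeightOne {A : Type*} (θ : A → ℕ → A) (r : ℕ) : Prop :=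
  ∀ u : ℕ → A, IsRightFixed θ r u →
    ∀ n, 1 ≤ n → Nat.Coprime n r → (∀ a, 1 ≤ a → u a = u 0 → n ∣ a) → n = 1

/-- The column number `c(θ)`. -/
def columnNumber {A : Type*} [Fintype A] (θ : A → ℕ → A) (r : ℕ) : ℕ :=
  sInf {c | ∃ k, 1 ≤ k ∧ ∃ j < r ^ k,
    c = (Set.range fun a : A => substPow θ r k a j).ncard}

/-- A minimal set for `θ`: a column image of cardinality `c(θ)`. -/
def IsMinimalSet {A : Type*} [Fintype A] (θ : A → ℕ → A) (r : ℕ) (M : Set A) : Prop :=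
  M.ncard = columnNumber θ r ∧
    ∃ k, 1 ≤ k ∧ ∃ j < r ^ k, M = Set.range fun a : A => substPow θ r k a j

/-- `d*(θ^k(a), θ^k(b))`: the proportion of coordinates where `θ^k(a)` and `θ^k(b)`
disagree. -/
def dStar {A : Type*} (θ : A → ℕ → A) (r k : ℕ) (a b : A) : ℝ :=
  (((Finset.range (r ^ k)).filter
      fun j => substPow θ r k a j ≠ substPow θ r k b j).card : ℝ) / ((r : ℝ) ^ k)

/-- `θ` is reduced: for no pair of distinct letters does `d*(θ^k(a), θ^k(b))` tend to `0`. -/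
def SubstReduced {A : Type*} (θ : A → ℕ → A) (r : ℕ) : Prop :=
  ∀ a b : A, a ≠ b →
    ¬ Filter.Tendsto (fun k => dStar θ r k a b) Filter.atTop (nhds (0 : ℝ))

/-- `ι : C → (ℕ → B)` presents `C` as the alphabet of `k`-blocks of the fixed point `u`
of `η`, and `ηk` as the `k`-compression `η^{(k)}` of `η`. -/
def IsCompression {B C : Type*} (η : B → ℕ → B) (r k : ℕ) (u : ℕ → B)
    (ι : C → ℕ → B) (ηk : C → ℕ → C) : Prop :=
  IsRightFixed η r u ∧
    (∀ c c' : C, (∀ j < k, ι c j = ι c' j) → c = c') ∧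
    (∀ c : C, ∃ m : ℕ, ∀ j < k, ι c j = u (m * k + j)) ∧
    (∀ m : ℕ, ∃ c : C, ∀ j < k, ι c j = u (m * k + j)) ∧
    (∀ c : C, ∀ i < r, ∀ j < k,
      ι (ηk c i) j = η (ι c ((i * k + j) / r)) ((i * k + j) % r))

/-- The `τ`-twist of a substitution: `(θ_τ(α))_j = τ^j(θ(α)_j)`. -/
def twistSubst {C : Type*} (θ : C → ℕ → C) (τ : C → C) : C → ℕ → C :=
  fun c j => τ^[j] (θ c j)

end


section Aux

theorem ax_shiftBy_add {A : Type*} (a b : ℤ) (x : ℤ → A) :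
    shiftBy a (shiftBy b x) = shiftBy (a + b) x := by
  funext n; simp [shiftBy, add_assoc]

theorem ax_shiftBy_zero {A : Type*} (x : ℤ → A) : shiftBy 0 x = x := by
  funext n; simp [shiftBy]

theorem ax_shiftMap {A : Type*} (x : ℤ → A) : shiftMap x = shiftBy 1 x := rfl

theorem ax_continuous_shiftBy {A : Type*} [TopologicalSpace A] (a : ℤ) :
    Continuous (shiftBy a : (ℤ → A) → (ℤ → A)) :=
  continuous_pi fun n => continuous_apply (n + a)

/-- invariance under all multiples of `R` -/
def axInv {A : Type*} (R : ℤ) (W : Set (ℤ → A)) : Prop :=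
  ∀ w ∈ W, ∀ t : ℤ, shiftBy (R * t) w ∈ W

def axMin {A : Type*} [TopologicalSpace A] (R : ℤ) (W : Set (ℤ → A)) : Prop :=
  ∀ V : Set (ℤ → A), V ⊆ W → IsClosed V → V.Nonempty → axInv R V → V = W

theorem ax_exists_min {A : Type*} [TopologicalSpace A] [CompactSpace A] (R : ℤ)
    (K : Set (ℤ → A)) (hK : IsClosed K) (hne : K.Nonempty) (hinv : axInv R K) :
    ∃ W ⊆ K, IsClosed W ∧ W.Nonempty ∧ axInv R W ∧ axMin R W := by
  have := zorn_superset_nonempty {V : Set (ℤ → A) | IsClosed V ∧ V.Nonempty ∧ axInv R V} (by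
    intro c hc hchain hcne
    refine ⟨⋂₀ c, ⟨isClosed_sInter fun s hs => (hc hs).1, ?_, ?_⟩,
      fun s hs => Set.sInter_subset_of_mem hs⟩
    · haveI : Nonempty c := hcne.to_subtype
      apply IsCompact.nonempty_sInter_of_directed_nonempty_isCompact_isClosed
      · intro s hs t ht
        rcases hchain.total hs ht with h | h
        · exact ⟨s, hs, subset_rfl, h⟩
        · exact ⟨t, ht, h, subset_rfl⟩
      · exact fun s hs => (hc hs).2.1
      · exact fun s hs => (hc hs).1.isCompact
      · exact fun s hs => (hc hs).1
    · intro w hw t s hs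
      exact (hc hs).2.2 w (hw s hs) t) K ⟨hK, hne, hinv⟩
  obtain ⟨W, hWK, hW⟩ := this
  refine ⟨W, hWK, hW.prop.1, hW.prop.2.1, hW.prop.2.2, ?_⟩
  intro V hV h1 h2 h3
  exact hV.antisymm (hW.le_of_le ⟨h1, h2, h3⟩ hV)

theorem ax_preimage_inv {A : Type*} {R : ℤ} {W : Set (ℤ → A)} (h : axInv R W) (d : ℤ) :
    axInv R (shiftBy d ⁻¹' W) := by
  intro w hw t
  have := h _ hw t
  simp only [Set.mem_preimage, ax_shiftBy_add] at this ⊢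
  rwa [add_comm]

/-- stabiliser -/
def axH {A : Type*} (W : Set (ℤ → A)) : AddSubgroup ℤ where
  carrier := {d | ∀ w, shiftBy d w ∈ W ↔ w ∈ W}
  zero_mem' := by intro w; rw [ax_shiftBy_zero]
  add_mem' := by
    intro a b ha hb w
    rw [← ax_shiftBy_add, ha, hb]
  neg_mem' := by
    intro a ha w
    rw [← ha, ax_shiftBy_add]; simp [ax_shiftBy_zero]

theorem ax_sub {A : Type*} [TopologicalSpace A] {R : ℤ} {W : Set (ℤ → A)}
    (hc : IsClosed W) (hi : axInv R W) (hm : axMin R W) (d : ℤ) (w : ℤ → A)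
    (hw : w ∈ W) (hd : shiftBy d w ∈ W) : ∀ v ∈ W, shiftBy d v ∈ W := by
  have : W ∩ shiftBy d ⁻¹' W = W := by
    apply hm
    · exact Set.inter_subset_left
    · exact hc.inter (hc.preimage (ax_continuous_shiftBy d))
    · exact ⟨w, hw, hd⟩
    · intro v hv t
      exact ⟨hi v hv.1 t, ax_preimage_inv hi d v hv.2 t⟩
  intro v hv
  rw [← this] at hv
  exact hv.2

theorem ax_memH {A : Type*} [TopologicalSpace A] {R : ℤ} {W : Set (ℤ → A)}
    (hc : IsClosed W) (hi : axInv R W) (hm : axMin R W) (d : ℤ) (w : ℤ → A)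
    (hw : w ∈ W) (hd : shiftBy d w ∈ W) : d ∈ axH W := by
  intro v
  constructor
  · intro hv
    have := ax_sub hc hi hm (-d) (shiftBy d w) hd
      (by rw [ax_shiftBy_add]; simpa [ax_shiftBy_zero] using hw) _ hv
    rw [ax_shiftBy_add] at this; simpa [ax_shiftBy_zero] using this
  · exact ax_sub hc hi hm d w hw hd v

theorem ax_gen {A : Type*} [TopologicalSpace A] {R : ℕ} (hR : 0 < R) {W : Set (ℤ → A)}
    (hne : W.Nonempty)
    (hc : IsClosed W) (hi : axInv R W) (hm : axMin R W) :
    ∃ g : ℕ, 0 < g ∧ g ∣ R ∧ ∀ d : ℤ, d ∈ axH W ↔ (g : ℤ) ∣ d := by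
  obtain ⟨a, ha⟩ := Int.subgroup_cyclic (axH W)
  obtain ⟨w, hw⟩ := hne
  have key : ∀ d : ℤ, d ∈ axH W ↔ (a.natAbs : ℤ) ∣ d := by
    intro d
    rw [ha, ← AddSubgroup.zmultiples_eq_closure, Int.mem_zmultiples_iff, Int.natAbs_dvd]
  have hRm : (R : ℤ) ∈ axH W := by
    apply ax_memH hc hi hm _ w hw
    simpa using hi w hw 1
  have hd : a.natAbs ∣ R := by exact_mod_cast (key _).1 hRm
  exact ⟨a.natAbs, Nat.pos_of_dvd_of_pos hd hR, hd, key⟩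

def axC {A : Type*} (D : ℤ) (W : Set (ℤ → A)) : Set (ℤ → A) :=
  {y | ∃ d : ℤ, D ∣ d ∧ shiftBy d y ∈ W}

theorem axC_red {A : Type*} {D : ℤ} {g : ℕ} (hg : 0 < g) {W : Set (ℤ → A)}
    (hD : D ∣ g) (hH : ∀ d : ℤ, d ∈ axH W ↔ (g : ℤ) ∣ d) (y : ℤ → A) (hy : y ∈ axC D W) :
    ∃ d : ℕ, d < g ∧ D ∣ d ∧ shiftBy d y ∈ W := by
  obtain ⟨d, hd, hw⟩ := hy
  have hg' : (g : ℤ) ≠ 0 := by exact_mod_cast hg.ne'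
  have h0 := Int.emod_nonneg d hg'
  have h1 := Int.emod_lt_of_pos d (by exact_mod_cast hg : (0 : ℤ) < g)
  have e : ((d % g).toNat : ℤ) = d % g := Int.toNat_of_nonneg h0
  refine ⟨(d % g).toNat, by omega, ?_, ?_⟩
  · rw [e]; exact (EuclideanDomain.dvd_mod_iff hD).2 hd
  · rw [e]
    have h2 : (d / g) * g ∈ axH W := (hH _).2 (Dvd.intro_left _ rfl)
    rw [← h2, ax_shiftBy_add]
    have : d / g * g + d % g = d := Int.ediv_mul_add_emod d g
    rwa [this]

theorem axC_closed {A : Type*} [TopologicalSpace A] {D : ℤ} {g : ℕ} (hg : 0 < g)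
    {W : Set (ℤ → A)} (hc : IsClosed W)
    (hD : D ∣ g) (hH : ∀ d : ℤ, d ∈ axH W ↔ (g : ℤ) ∣ d) : IsClosed (axC D W) := by
  have : axC D W = ⋃ d ∈ {d : ℕ | d < g ∧ D ∣ d}, shiftBy (d : ℤ) ⁻¹' W := by
    ext y
    simp only [Set.mem_iUnion, Set.mem_preimage, Set.mem_setOf_eq]
    constructor
    · intro hy
      obtain ⟨d, h1, h2, h3⟩ := axC_red hg hD hH y hy
      exact ⟨d, ⟨h1, h2⟩, h3⟩
    · rintro ⟨d, ⟨h1, h2⟩, h3⟩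
      exact ⟨d, h2, h3⟩
  rw [this]
  apply Set.Finite.isClosed_biUnion
  · exact (Set.finite_lt_nat g).subset fun d hd => hd.1
  · intro d _
    exact hc.preimage (ax_continuous_shiftBy _)

theorem axC_inv {A : Type*} {D R : ℤ} {W : Set (ℤ → A)} (h : D ∣ R) : axInv R (axC D W) := by
  rintro w ⟨d, hd, hw⟩ t
  refine ⟨d - R * t, dvd_sub hd (h.mul_right t), ?_⟩
  rw [ax_shiftBy_add]; simpa using hw

/-- Y minimal equals the union of translates -/
theorem ax_cover {A : Type*} [TopologicalSpace A] {Y W : Set (ℤ → A)} {g : ℕ} (hg : 0 < g)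
    (hYi : axInv 1 Y) (hYm : axMin 1 Y) (hWY : W ⊆ Y) (hc : IsClosed W) (hne : W.Nonempty)
    (hH : ∀ d : ℤ, d ∈ axH W ↔ (g : ℤ) ∣ d) : axC 1 W = Y := by
  apply hYm
  · rintro y ⟨d, -, hd⟩
    have := hYi _ (hWY hd) (-d)
    rw [ax_shiftBy_add] at this
    simpa [ax_shiftBy_zero] using this
  · exact axC_closed hg hc (one_dvd _) hH
  · obtain ⟨w, hw⟩ := hne
    exact ⟨w, 0, one_dvd _, by rwa [ax_shiftBy_zero]⟩
  · exact axC_inv (one_dvd _)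

theorem ax_dvd {A : Type*} [TopologicalSpace A] {Y W P : Set (ℤ → A)} {g : ℕ} (hg : 0 < g)
    {R : ℤ} (hc : IsClosed W) (hi : axInv R W) (hm : axMin R W)
    (hH : ∀ d : ℤ, d ∈ axH W ↔ (g : ℤ) ∣ d) (hcov : axC 1 W = Y)
    (hPY : P ⊆ Y) (hPne : P.Nonempty) {N m : ℤ}
    (hPmin : ∀ y ∈ P, P ⊆ closure (Set.range fun t : ℤ => shiftBy (N * t) y))
    (hPm : ∀ y ∈ P, shiftBy m y ∈ P) {D : ℤ} (hDg : D ∣ g) (hDN : D ∣ N) : D ∣ m := by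
  obtain ⟨p, hp⟩ := hPne
  have hpY := hPY hp
  rw [← hcov] at hpY
  obtain ⟨d, -, hd⟩ := hpY
  have hsub : P ⊆ shiftBy d ⁻¹' axC D W := by
    refine (hPmin p hp).trans (closure_minimal ?_ ?_)
    · rintro _ ⟨t, rfl⟩
      apply ax_preimage_inv (axC_inv hDN) d p
      exact ⟨0, dvd_zero _, by rwa [ax_shiftBy_zero]⟩
    · exact (axC_closed hg hc hDg hH).preimage (ax_continuous_shiftBy d)
  obtain ⟨e, he, hew⟩ := hsub (hPm p hp)
  have : e + m ∈ axH W := by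
    apply ax_memH hc hi hm _ _ hd
    rw [ax_shiftBy_add] at hew ⊢
    rw [ax_shiftBy_add] at hew
    convert hew using 2
    ring
  have h2 := hDg.trans ((hH _).1 this)
  exact (dvd_add_right he).1 h2

/-- Language -/
def axLang {B : Type*} (Y : Set (ℤ → B)) (L : ℕ) : Set (Fin L → B) :=
  (fun (y : ℤ → B) (i : Fin L) => y (i : ℕ)) '' Y

theorem ax_MH_step {B : Type*} [Finite B] {Y : Set (ℤ → B)} (hYi : axInv 1 Y)
    (hinf : Y.Infinite) (L : ℕ) : (axLang Y L).ncard < (axLang Y (L + 1)).ncard := by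
  by_contra hlt
  push Not at hlt
  have hi : ∀ y ∈ Y, ∀ t : ℤ, shiftBy t y ∈ Y := fun y hy t => by simpa using hYi y hy t
  -- drop last
  have h1 : Set.InjOn (fun (u : Fin (L + 1) → B) (i : Fin L) => u i.castSucc)
      (axLang Y (L + 1)) := by
    apply Set.injOn_of_ncard_image_eq _ (Set.toFinite _)
    apply le_antisymm (Set.ncard_image_le (Set.toFinite _))
    refine hlt.trans (Set.ncard_le_ncard ?_ (Set.toFinite _))
    rintro _ ⟨y, hy, rfl⟩
    exact ⟨_, ⟨y, hy, rfl⟩, rfl⟩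
  have h2 : Set.InjOn (fun (u : Fin (L + 1) → B) (i : Fin L) => u i.succ)
      (axLang Y (L + 1)) := by
    apply Set.injOn_of_ncard_image_eq _ (Set.toFinite _)
    apply le_antisymm (Set.ncard_image_le (Set.toFinite _))
    refine hlt.trans (Set.ncard_le_ncard ?_ (Set.toFinite _))
    rintro _ ⟨y, hy, rfl⟩
    refine ⟨_, ⟨shiftBy (-1) y, hi y hy _, rfl⟩, ?_⟩
    funext i
    simp [shiftBy]
  have f1 : ∀ y ∈ Y, ∀ y' ∈ Y, (∀ i < L, y (i : ℕ) = y' (i : ℕ)) →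
      ∀ i < L + 1, y (i : ℕ) = y' (i : ℕ) := by
    intro y hy y' hy' h i hi'
    have := h1 ⟨y, hy, rfl⟩ ⟨y', hy', rfl⟩ (by funext i; simpa using h i i.2)
    exact congrFun this ⟨i, hi'⟩
  have f2 : ∀ y ∈ Y, ∀ y' ∈ Y, (∀ i < L, y ((i : ℕ) + 1) = y' ((i : ℕ) + 1)) →
      ∀ i < L + 1, y (i : ℕ) = y' (i : ℕ) := by
    intro y hy y' hy' h i hi'
    have := h2 ⟨y, hy, rfl⟩ ⟨y', hy', rfl⟩ (by funext i; simpa using h i i.2)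
    exact congrFun this ⟨i, hi'⟩
  have key : ∀ y ∈ Y, ∀ y' ∈ Y, (∀ i < L, y (i : ℕ) = y' (i : ℕ)) →
      ∀ t : ℤ, ∀ i < L + 1, y ((i : ℕ) + t) = y' ((i : ℕ) + t) := by
    intro y hy y' hy' h t
    induction t using Int.induction_on with
    | zero => simpa using f1 y hy y' hy' h
    | succ k ih =>
      intro i hi'
      refine f1 _ (hi y hy (k + 1)) _ (hi y' hy' (k + 1)) ?_ i hi'
      intro i hi2
      have := ih (i + 1) (by omega)
      simp only [shiftBy]
      push_cast at this
      rw [show (i : ℤ) + (k + 1) = i + 1 + k by ring]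
      exact this
    | pred k ih =>
      intro i hi'
      refine f2 _ (hi y hy (-k - 1)) _ (hi y' hy' (-k - 1)) ?_ i hi'
      intro i hi2
      have := ih i (by omega)
      simp only [shiftBy]
      rw [show (i : ℤ) + 1 + (-k - 1) = i + -k by ring]
      exact this
  apply hinf
  apply Set.Finite.of_finite_image (f := fun (y : ℤ → B) (i : Fin L) => y (i : ℕ))
    (Set.toFinite _)
  intro y hy y' hy' h
  funext t
  have := key y hy y' hy' (fun i hi' => congrFun h ⟨i, hi'⟩) t 0 (by omega)
  simpa using this

theorem ax_MH {B : Type*} [Finite B] {Y : Set (ℤ → B)} (hYi : axInv 1 Y)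
    (hinf : Y.Infinite) (L : ℕ) : L < (axLang Y L).ncard := by
  induction L with
  | zero =>
    rw [Set.ncard_pos]
    exact hinf.nonempty.image _
  | succ k ih =>
    have := ax_MH_step hYi hinf k
    omega

/-! substitutions -/

theorem ax_substPow_add {A : Type*} (θ : A → ℕ → A) (r : ℕ) (hr : 0 < r) (k l : ℕ) (a : A) (i : ℕ) :
    substPow θ r (k + l) a i = substPow θ r l (substPow θ r k a (i / r ^ l)) (i % r ^ l) := by
  induction l generalizing i with
  | zero => simp [substPow]
  | succ l ih =>
    rw [← add_assoc]
    simp only [substPow]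
    rw [ih, Nat.div_div_eq_div_mul, ← pow_succ']
    have e1 : i % r ^ (l + 1) / r = i / r % r ^ l := by
      rw [pow_succ', Nat.mod_mul_right_div_self]
    have e2 : i % r ^ (l + 1) % r = i % r := by
      rw [pow_succ', Nat.mod_mul_right_mod]
    rw [e1, e2]

theorem ax_substActPow_eq {A : Type*} (θ : A → ℕ → A) (r k : ℕ) (x : ℤ → A) (n : ℤ) :
    substActPow θ r k x n
      = substPow θ r k (x (n / (r ^ k : ℕ))) ((n % (r ^ k : ℕ)).toNat) := by
  have : (0 : ℤ) ≤ (r ^ k : ℕ) := by positivity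
  simp only [substActPow]
  rw [← Int.fdiv_eq_ediv_of_nonneg _ this, ← Int.fmod_eq_emod_of_nonneg _ this]
  push_cast
  rfl

theorem ax_substActPow_add {A : Type*} (θ : A → ℕ → A) (r : ℕ) (hr : 0 < r) (k l : ℕ) (x : ℤ → A) :
    substActPow θ r (k + l) x = substActPow θ r l (substActPow θ r k x) := by
  funext n
  simp only [ax_substActPow_eq]
  have hk : (0 : ℤ) < (r ^ k : ℕ) := by positivity
  have hl : (0 : ℤ) < (r ^ l : ℕ) := by positivity
  rw [ax_substPow_add θ r hr]
  have e1 : ((r ^ (k + l) : ℕ) : ℤ) = (r ^ l : ℕ) * (r ^ k : ℕ) := by push_cast; ring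
  have e0 : ((n % ((r ^ l : ℕ) * (r ^ k : ℕ))).toNat : ℤ) = n % ((r ^ l : ℕ) * (r ^ k : ℕ)) :=
    Int.toNat_of_nonneg (Int.emod_nonneg _ (by positivity))
  rw [e1]
  clear e1
  generalize r ^ k = u at *
  generalize r ^ l = v at *
  congr 1
  · congr 1
    · rw [Int.ediv_ediv_of_nonneg hl.le]
    · zify
      rw [e0, Int.toNat_of_nonneg (Int.emod_nonneg _ hk.ne')]
      have e2 : n % ((v : ℤ) * u) = n + v * (-(u * (n / v / u))) := by
        rw [Int.emod_def, Int.ediv_ediv_of_nonneg hl.le]; ring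
      rw [e2, Int.add_mul_ediv_left _ _ hl.ne', Int.emod_def]; ring
  · zify
    rw [e0, Int.toNat_of_nonneg (Int.emod_nonneg _ hl.ne')]
    exact Int.emod_emod_of_dvd n (Dvd.intro _ rfl)

theorem ax_substActPow_mul {A : Type*} (θ : A → ℕ → A) (r : ℕ) (hr : 0 < r) (j c : ℕ) (x : ℤ → A)
    (h : substActPow θ r j x = x) : substActPow θ r (j * c) x = x := by
  induction c with
  | zero => funext n; simp [ax_substActPow_eq, substPow]
  | succ c ih => rw [mul_add, ax_substActPow_add θ r hr, ih, mul_one, h]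

theorem ax_substActPow_shift {A : Type*} (θ : A → ℕ → A) (r : ℕ) (hr : 0 < r) (k : ℕ) (t : ℤ)
    (x : ℤ → A) :
    shiftBy ((r ^ k : ℕ) * t) (substActPow θ r k x) = substActPow θ r k (shiftBy t x) := by
  funext n
  have hk : ((r ^ k : ℕ) : ℤ) ≠ 0 := by positivity
  simp only [shiftBy, ax_substActPow_eq]
  rw [Int.add_mul_ediv_left _ _ hk, Int.add_mul_emod_self_left]

theorem ax_substActPow_cont {A : Type*} [TopologicalSpace A] [DiscreteTopology A]
    (θ : A → ℕ → A) (r k : ℕ) : Continuous (substActPow θ r k : (ℤ → A) → (ℤ → A)) := by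
  refine continuous_pi fun n => ?_
  exact (continuous_of_discreteTopology (f := fun a => substPow θ r k a _)).comp
    (continuous_apply _)

theorem ax_codeMap_cont {A B : Type*} [TopologicalSpace A] [DiscreteTopology A]
    [TopologicalSpace B] (τ : A → B) : Continuous (codeMap τ) := by
  refine continuous_pi fun n => ?_
  exact (continuous_of_discreteTopology (f := τ)).comp (continuous_apply _)

theorem ax_count {A B : Type*} [Fintype A] [Finite B] (θ : A → ℕ → A) (r k : ℕ) (hr : 0 < r)
    (τ : A → B) (Y W : Set (ℤ → B)) (g : ℕ) (hg : g ≤ r ^ k)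
    (hW : ∀ w ∈ W, ∃ x, w = codeMap τ (substActPow θ r k x))
    (hcov : ∀ y ∈ Y, ∃ d : ℕ, d < g ∧ shiftBy d y ∈ W) :
    (axLang Y (r ^ k)).ncard ≤ Fintype.card A * Fintype.card A * g := by
  set R := r ^ k with hR
  let F : A × A × Fin g → (Fin R → B) := fun p i =>
    τ (substPow θ r k (if (i : ℕ) < (p.2.2 : ℕ) then p.1 else p.2.1)
      ((((i : ℕ) : ℤ) - ((p.2.2 : ℕ) : ℤ)) % (R : ℤ)).toNat)
  have hsub : axLang Y R ⊆ Set.range F := by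
    rintro _ ⟨y, hy, rfl⟩
    obtain ⟨d, hd, hw⟩ := hcov y hy
    obtain ⟨x, hx⟩ := hW _ hw
    refine ⟨(x (-1), x 0, ⟨d, hd⟩), ?_⟩
    funext i
    have e : y (i : ℕ) = (shiftBy d y) ((i : ℕ) - d) := by simp [shiftBy]
    show _ = y (i : ℕ)
    rw [e, hx]
    simp only [codeMap, ax_substActPow_eq, F]
    have hi := i.2
    have hRp : (0 : ℤ) < R := by positivity
    rw [← hR]
    congr 2
    split_ifs with h
    · congr 1
      symm
      rw [Int.ediv_eq_iff_of_pos hRp]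
      constructor <;> omega
    · congr 1
      symm
      apply Int.ediv_eq_zero_of_lt <;> omega
  calc (axLang Y R).ncard ≤ (Set.range F).ncard := Set.ncard_le_ncard hsub (Set.toFinite _)
    _ ≤ Nat.card (A × A × Fin g) := by
        rw [← Set.image_univ, ← Set.ncard_univ]
        exact Set.ncard_image_le (Set.toFinite _)
    _ = _ := by simp [Nat.card_prod, mul_assoc]

theorem ax_arith {N m : ℕ} (hN : 0 < N) (hm : m ∣ N) (hne : m ≠ N) :
    ∃ p a N' : ℕ, p.Prime ∧ 1 ≤ a ∧ N = p ^ a * N' ∧ p.Coprime N' ∧ ¬ p ^ a ∣ m := by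
  have hnd : ¬ N ∣ m := fun h => hne (Nat.dvd_antisymm hm h)
  have : ∃ p, p.Prime ∧ ¬ p ^ N.factorization p ∣ m := by
    by_contra hcon
    push Not at hcon
    apply hnd
    rw [Nat.dvd_iff_prime_pow_dvd_dvd]
    intro p k hp hk
    have := (hp.pow_dvd_iff_le_factorization hN.ne').1 hk
    exact (pow_dvd_pow p this).trans (hcon p hp)
  obtain ⟨p, hp, hd⟩ := this
  refine ⟨p, N.factorization p, N / p ^ N.factorization p, hp, ?_, ?_, ?_, hd⟩
  · rcases Nat.eq_zero_or_pos (N.factorization p) with h | h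
    · rw [h] at hd; simp at hd
    · exact h
  · exact (Nat.ordProj_mul_ordCompl_eq_self N p).symm
  · exact Nat.coprime_ordCompl hp hN.ne'

theorem ax_arith2 {p a N' l g : ℕ} (hp : p.Prime) (ha : 1 ≤ a) (hc : p.Coprime N')
    (hN' : 0 < N')
    (hg : g ∣ (p ^ a * N') ^ l) (hnd : ¬ p ^ a ∣ g) : g ≤ p ^ a * N' ^ l := by
  rw [mul_pow, ← pow_mul] at hg
  obtain ⟨b, c, hb, hc', rfl⟩ := (Nat.dvd_mul).1 hg
  obtain ⟨e, he, rfl⟩ := (Nat.dvd_prime_pow hp).1 hb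
  have hea : e < a := by
    by_contra h
    push Not at h
    exact hnd ((pow_dvd_pow p h).trans (Dvd.intro _ rfl))
  exact Nat.mul_le_mul (Nat.pow_le_pow_right hp.pos hea.le) (Nat.le_of_dvd (by positivity) hc')

theorem ax_P_shift {B : Type*} {m : ℕ} {P : ZMod m → Set (ℤ → B)}
    (h : ∀ i, shiftMap '' P i = P (i + 1)) (t : ℤ) :
    ∀ i, ∀ y ∈ P i, shiftBy t y ∈ P (i + t) := by
  induction t using Int.induction_on with
  | zero => intro i y hy; simpa [ax_shiftBy_zero] using hy
  | succ k ih =>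
    intro i y hy
    have := ih i y hy
    have h2 : shiftBy (k + 1) y ∈ shiftMap '' P (i + (k : ℤ)) :=
      ⟨_, this, by rw [ax_shiftMap, ax_shiftBy_add, add_comm]⟩
    rw [h] at h2
    push_cast at h2 ⊢
    rwa [← add_assoc]
  | pred k ih =>
    intro i y hy
    have := ih i y hy
    have e : i + ((-k : ℤ) : ZMod m) = (i + ((-k - 1 : ℤ) : ZMod m)) + 1 := by
      push_cast; ring
    rw [e, ← h] at this
    obtain ⟨z, hz, hz'⟩ := this
    have : shiftBy (-k - 1) y = z := by
      rw [show (-k - 1 : ℤ) = -1 + -k by ring, ← ax_shiftBy_add, ← hz', ax_shiftMap,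
        ax_shiftBy_add]
      simp [ax_shiftBy_zero]
    rwa [this]

end Aux

/-- for an infinite primitive `r`-automatic shift `Y`, every cyclic
`σ^{r^n}`-minimal partition of `Y` has exactly `r^n` members, i.e. `γ(r^n) = r^n`. -/
theorem stmt_1 {A B : Type*} [Fintype A] [Fintype B]
    (θ : A → ℕ → A) (r : ℕ) (hr : 2 ≤ r) (hθ : SubstPrimitive θ r)
    (X : Set (ℤ → A)) (hX : IsSubstShift θ r X)
    (τ : A → B) (Y : Set (ℤ → B)) (hY : Y = codeMap τ '' X) (hYinf : Y.Infinite) :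
    ∀ n m : ℕ, ∀ P : ZMod m → Set (ℤ → B),
      IsCyclicMinPartition Y (r ^ n) m P → m = r ^ n := by
  intro n m P hP
  letI : TopologicalSpace A := ⊥
  letI : TopologicalSpace B := ⊥
  haveI : DiscreteTopology A := ⟨rfl⟩
  haveI : DiscreteTopology B := ⟨rfl⟩
  obtain ⟨hm0, hPc, hPd, hPU, hPs, hPm⟩ := hP
  have hPsh := ax_P_shift hPs
  have hr0 : 0 < r := by omega
  have huniq : ∀ i j, ∀ y, y ∈ P i → y ∈ P j → i = j := by
    intro i j y hi hj
    by_contra hne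
    exact Set.disjoint_left.1 (hPd hne) hi hj
  have hPY : ∀ i, P i ⊆ Y := fun i => hPU ▸ Set.subset_iUnion P i
  have hYi : axInv 1 Y := by
    intro y hy t
    rw [← hPU] at hy
    obtain ⟨i, hi⟩ := Set.mem_iUnion.1 hy
    exact hPY _ (hPsh (1 * t) i y hi)
  have hYm : axMin 1 Y := by
    intro V hVY hVc hVne hVi
    refine hVY.antisymm ?_
    obtain ⟨v, hv⟩ := hVne
    have hv' := hVY hv
    rw [← hPU] at hv'
    obtain ⟨i, hi⟩ := Set.mem_iUnion.1 hv'
    have hPiV : P i ⊆ V := by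
      refine ((hPm i).2.2 v hi).trans (closure_minimal ?_ hVc)
      rintro _ ⟨t, rfl⟩
      simpa using hVi v hv (((r ^ n : ℕ) : ℤ) * t)
    intro y hy
    rw [← hPU] at hy
    obtain ⟨i', hi'⟩ := Set.mem_iUnion.1 hy
    obtain ⟨t, ht⟩ := ZMod.intCast_surjective (i - i')
    have h1 := hPsh t i' y hi'
    rw [ht, add_sub_cancel] at h1
    have h2 := hVi _ (hPiV h1) (-t)
    rw [ax_shiftBy_add] at h2
    simpa [ax_shiftBy_zero] using h2
  obtain ⟨y0, hy0⟩ := (hPm 0).1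
  have hmN : m ∣ r ^ n := by
    have h1 := hPsh ((r ^ n : ℕ) : ℤ) 0 y0 hy0
    have h2 := (hPm 0).2.1 y0 hy0 1
    rw [mul_one] at h2
    have := huniq _ _ _ h1 h2
    rw [zero_add, Int.cast_natCast] at this
    exact (ZMod.natCast_eq_zero_iff _ _).1 this
  by_contra hne
  have hN0 : 0 < r ^ n := by positivity
  obtain ⟨p, a, N', hp, ha, hN, hcop, hnd⟩ := ax_arith hN0 hmN hne
  have hN'0 : 0 < N' := by
    rcases Nat.eq_zero_or_pos N' with h | h
    · rw [h] at hN; omega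
    · exact h
  obtain ⟨x, ⟨j, hj, hxj⟩, hXx⟩ := hX
  have hXx' : X = closure (Set.range fun t : ℤ => shiftBy t x) := hXx
  set c := Fintype.card A * Fintype.card A * p ^ a with hcdef
  set l := j * c with hl
  set k := n * l with hk
  have hxk : substActPow θ r k x = x := by
    have : k = j * (n * c) := by rw [hk, hl]; ring
    rw [this]
    exact ax_substActPow_mul θ r hr0 _ _ x hxj
  have hXc : IsClosed X := hXx' ▸ isClosed_closure
  have hxX : x ∈ X := by
    rw [hXx']; exact subset_closure ⟨0, ax_shiftBy_zero x⟩
  have hXi : ∀ t : ℤ, ∀ z ∈ X, shiftBy t z ∈ X := by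
    intro t
    have : X ⊆ shiftBy t ⁻¹' X := by
      conv_lhs => rw [hXx']
      refine closure_minimal ?_ (hXc.preimage (ax_continuous_shiftBy t))
      rintro _ ⟨s, rfl⟩
      rw [Set.mem_preimage, ax_shiftBy_add, hXx']
      exact subset_closure ⟨_, rfl⟩
    exact this
  have hXθ : ∀ z ∈ X, substActPow θ r k z ∈ X := by
    have : X ⊆ substActPow θ r k ⁻¹' X := by
      conv_lhs => rw [hXx']
      refine closure_minimal ?_ (hXc.preimage (ax_substActPow_cont θ r k))
      rintro _ ⟨s, rfl⟩
      rw [Set.mem_preimage, ← ax_substActPow_shift θ r hr0, hxk]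
      exact hXi _ _ hxX
    exact this
  obtain ⟨W, hWK, hWc, hWne, hWi, hWm⟩ := ax_exists_min ((r ^ k : ℕ) : ℤ)
    ((fun z => codeMap τ (substActPow θ r k z)) '' X)
    ((hXc.isCompact.image ((ax_codeMap_cont τ).comp (ax_substActPow_cont θ r k))).isClosed)
    ⟨_, x, hxX, rfl⟩ (by
      rintro _ ⟨z, hz, rfl⟩ t
      refine ⟨shiftBy t z, hXi t z hz, ?_⟩
      simp only
      rw [← ax_substActPow_shift θ r hr0]
      rfl)
  have hWY : W ⊆ Y := by
    intro w hw
    obtain ⟨z, hz, rfl⟩ := hWK hw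
    rw [hY]
    exact ⟨_, hXθ z hz, rfl⟩
  have hR0 : 0 < r ^ k := by positivity
  obtain ⟨g, hg0, hgR, hH⟩ := ax_gen hR0 hWne hWc hWi hWm
  have hcov := ax_cover hg0 hYi hYm hWY hWc hWne hH
  have hgnd : ¬ p ^ a ∣ g := by
    intro hdiv
    apply hnd
    have := ax_dvd (P := P 0) (N := ((r ^ n : ℕ) : ℤ)) (m := (m : ℤ)) (D := ((p ^ a : ℕ) : ℤ))
      hg0 hWc hWi hWm hH hcov (hPY 0) (hPm 0).1 (hPm 0).2.2
      (by
        intro y hy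
        have := hPsh m 0 y hy
        simpa using this)
      (by exact_mod_cast hdiv)
      (by rw [hN]; exact_mod_cast Dvd.intro _ rfl)
    exact_mod_cast this
  have hRl : r ^ k = (p ^ a * N') ^ l := by rw [hk, pow_mul, hN]
  have hgle := ax_arith2 hp ha hcop hN'0 (hRl ▸ hgR) hgnd
  have hcount := ax_count θ r k hr0 τ Y W g (Nat.le_of_dvd hR0 hgR)
    (fun w hw => by
      obtain ⟨z, hz, rfl⟩ := hWK hw
      exact ⟨z, rfl⟩)
    (fun y hy => by
      rw [← hcov] at hy
      obtain ⟨d, h1, h2, h3⟩ := axC_red hg0 (one_dvd _) hH y hy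
      exact ⟨d, h1, h3⟩)
  have hMH := ax_MH hYi hYinf (r ^ k)
  have h1 : r ^ k < c * N' ^ l := by
    calc r ^ k < _ := hMH
      _ ≤ _ := hcount
      _ ≤ Fintype.card A * Fintype.card A * (p ^ a * N' ^ l) := Nat.mul_le_mul_left _ hgle
      _ = _ := by rw [hcdef]; ring
  rw [hRl, mul_pow] at h1
  have h2 := lt_of_mul_lt_mul_right h1 (Nat.zero_le _)
  have h3 : c ≤ l := Nat.le_mul_of_pos_left c hj
  have h4 : l < (p ^ a) ^ l := Nat.lt_pow_self (Nat.one_lt_pow (by omega) hp.one_lt)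
  omega
end

section
/- Let θ be a pair-aperiodic substitution of constant length r on a finite alphabet 𝒜 and let (a,b) be an asymptotic disjoint pair. Then there exists a periodic pair (a',b') such that for every k ≥ 2|𝒜|² and every pair (c,d) that is reachable from (a',b'), the pair (c,d) is k-reachable from (a,b). -/
open scoped Classical

def Wlk {V : Type*} (R : V → V → Prop) : ℕ → V → V → Prop
  | 0, u, v => u = v
  | k + 1, u, v => ∃ w, Wlk R k u w ∧ R w v

lemma Wlk.add {V : Type*} {R : V → V → Prop} {m : ℕ} {u v : V} (h : Wlk R m u v) :
    ∀ {n : ℕ} {w : V}, Wlk R n v w → Wlk R (m + n) u w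
  | 0, w, h' => by
    have h2 : v = w := h'
    subst h2; exact h
  | n + 1, w, h' => by
    obtain ⟨x, hx, hr⟩ := h'
    exact ⟨x, Wlk.add h hx, hr⟩

lemma Wlk.fn {V : Type*} {R : V → V → Prop} {k : ℕ} {u v : V} (h : Wlk R k u v) :
    ∃ f : ℕ → V, f 0 = u ∧ f k = v ∧ ∀ i < k, R (f i) (f (i + 1)) := by
  induction k generalizing v with
  | zero => exact ⟨fun _ => u, rfl, h, by simp⟩
  | succ k ih =>
    obtain ⟨w, hw, hr⟩ := h
    obtain ⟨f, h0, hk, hf⟩ := ih hw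
    refine ⟨fun i => if i ≤ k then f i else v, by simp [h0], by simp, ?_⟩
    intro i hi
    rcases Nat.lt_or_ge i k with h | h
    · have h1 : i ≤ k := h.le
      have h2 : i + 1 ≤ k := h
      simp only [h1, h2, if_true]; exact hf i h
    · have h1 : i = k := by omega
      subst h1
      simp [hk, hr]

lemma Wlk.of_fn {V : Type*} {R : V → V → Prop} {k : ℕ} {f : ℕ → V}
    (hf : ∀ i < k, R (f i) (f (i + 1))) (i n : ℕ) (h : i + n ≤ k) :
    Wlk R n (f i) (f (i + n)) := by
  induction n with
  | zero => exact rfl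
  | succ n ih => exact ⟨f (i + n), ih (by omega), hf _ (by omega)⟩

lemma pigeon_fn {V : Type*} [Fintype V] (f : ℕ → V) :
    ∃ i n, 1 ≤ n ∧ i + n ≤ Fintype.card V ∧ f i = f (i + n) := by
  obtain ⟨x, y, hne, he⟩ := Fintype.exists_ne_map_eq_of_card_lt
    (fun i : Fin (Fintype.card V + 1) => f i) (by simp)
  have hne' : (x : ℕ) ≠ y := fun h => hne (Fin.ext h)
  have hx := x.2
  have hy := y.2
  rcases Nat.lt_or_ge (x : ℕ) y with h | h
  · refine ⟨x, y - x, by omega, by omega, ?_⟩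
    rw [he]; congr 1; omega
  · refine ⟨y, x - y, by omega, by omega, ?_⟩
    rw [← he]; congr 1; omega

lemma Wlk.short {V : Type*} [Fintype V] {R : V → V → Prop} {k : ℕ} {u v : V}
    (h : Wlk R k u v) : ∃ m, m ≤ Fintype.card V ∧ Wlk R m u v := by
  induction k using Nat.strong_induction_on with
  | _ k ih =>
    by_cases hk : k ≤ Fintype.card V
    · exact ⟨k, hk, h⟩
    · obtain ⟨f, h0, h1, hf⟩ := h.fn
      obtain ⟨i, n, hn, hin, he⟩ := pigeon_fn f
      have w1 := Wlk.of_fn hf 0 i (by omega)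
      have w2 := Wlk.of_fn hf (i + n) (k - (i + n)) (by omega)
      rw [show i + n + (k - (i + n)) = k by omega, h1, ← he] at w2
      rw [h0, zero_add] at w1
      exact ih _ (by omega) (w1.add w2)

lemma Wlk.loop {V : Type*} {R : V → V → Prop} {v : V} (h : R v v) : ∀ n, Wlk R n v v
  | 0 => rfl
  | n + 1 => ⟨v, Wlk.loop h n, h⟩

def pStep {A : Type*} (θ : A → ℕ → A) (r : ℕ) (x y : A × A) : Prop :=
  ∃ j < r, θ x.1 j = y.1 ∧ θ x.2 j = y.2

lemma reach_iff {A : Type*} (θ : A → ℕ → A) (r : ℕ) (hr : 2 ≤ r) (k : ℕ) (a b c d : A) :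
    PairReachable θ r k a b c d ↔ Wlk (pStep θ r) k (a, b) (c, d) := by
  induction k generalizing c d with
  | zero =>
    constructor
    · rintro ⟨j, hj, h1, h2⟩
      exact Prod.ext h1 h2
    · intro h
      have h' : (a, b) = (c, d) := h
      simp only [Prod.mk.injEq] at h'
      exact ⟨0, by simp, h'.1, h'.2⟩
  | succ k ih =>
    constructor
    · rintro ⟨j, hj, h1, h2⟩
      refine ⟨(substPow θ r k a (j / r), substPow θ r k b (j / r)), (ih _ _).1
        ⟨j / r, ?_, rfl, rfl⟩, j % r, Nat.mod_lt _ (by omega), h1, h2⟩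
      exact Nat.div_lt_of_lt_mul (by rw [pow_succ'] at hj; exact hj)
    · rintro ⟨⟨e, f⟩, hw, i, hi, h1, h2⟩
      obtain ⟨j, hj, h3, h4⟩ := (ih _ _).2 hw
      have hd : (r * j + i) / r = j := by
        rw [Nat.mul_add_div (by omega), Nat.div_eq_of_lt hi, add_zero]
      have hm : (r * j + i) % r = i := by
        rw [Nat.mul_add_mod, Nat.mod_eq_of_lt hi]
      refine ⟨r * j + i, ?_, ?_, ?_⟩
      · rw [pow_succ']
        calc r * j + i < r * (j + 1) := by rw [mul_add]; omega
          _ ≤ _ := Nat.mul_le_mul_left _ hj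
      · simp only [substPow, hd, hm, h3]; exact h1
      · simp only [substPow, hd, hm, h4]; exact h2

lemma Wlk.diag {A : Type*} {θ : A → ℕ → A} {r k : ℕ} {u v : A × A}
    (h : Wlk (pStep θ r) k u v) (hu : u.1 = u.2) : v.1 = v.2 := by
  induction k generalizing v with
  | zero =>
    have h' : u = v := h
    exact h' ▸ hu
  | succ k ih =>
    obtain ⟨w, hw, j, hj, h1, h2⟩ := h
    rw [← h1, ← h2, ih hw]

/-- for a pair-aperiodic substitution and an asymptotic disjoint pair `(a,b)`,
there is a periodic pair `(a',b')` such that every pair reachable from `(a',b')` is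
`k`-reachable from `(a,b)` for every `k ≥ 2|𝒜|²`. -/
theorem stmt_6 {A : Type*} [Fintype A] (θ : A → ℕ → A) (r : ℕ) (hr : 2 ≤ r)
    (hap : PairAperiodic θ r) (a b : A) (hab : AsympDisjointPair θ r a b) :
    ∃ a' b' : A, IsPeriodicPair θ r a' b' ∧
      ∀ k : ℕ, 2 * Fintype.card A ^ 2 ≤ k →
        ∀ c d : A, (∃ k' : ℕ, PairReachable θ r k' a' b' c d) →
          PairReachable θ r k a b c d := by
  have hcard : Fintype.card (A × A) = Fintype.card A ^ 2 := by
    rw [Fintype.card_prod, sq]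
  have hpos : 1 ≤ Fintype.card (A × A) := Fintype.card_pos_iff.2 ⟨(a, b)⟩
  obtain ⟨j, hj, hne⟩ := hab _ hpos
  have w := (reach_iff θ r hr _ a b _ _).1 ⟨j, hj, rfl, rfl⟩
  obtain ⟨f, h0, h1, hf⟩ := w.fn
  obtain ⟨i, n, hn, hin, he⟩ := pigeon_fn f
  have w1 := Wlk.of_fn hf 0 i (by omega)
  rw [h0, zero_add] at w1
  have w2 := Wlk.of_fn hf i n hin
  rw [← he] at w2
  have w3 := Wlk.of_fn hf i (Fintype.card (A × A) - i) (by omega)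
  rw [show i + (Fintype.card (A × A) - i) = Fintype.card (A × A) by omega, h1] at w3
  have hper : IsPeriodicPair θ r (f i).1 (f i).2 :=
    ⟨fun h => hne (w3.diag h), n, hn, (reach_iff θ r hr _ _ _ _ _).2 w2⟩
  refine ⟨(f i).1, (f i).2, hper, ?_⟩
  rintro k hk c d ⟨k', hk'⟩
  have hl : pStep θ r (f i) (f i) := hap _ _ hper
  obtain ⟨m, hm, w4⟩ := ((reach_iff θ r hr _ _ _ _ _).1 hk').short
  rw [reach_iff θ r hr]
  have w5 := (w1.add (Wlk.loop hl (k - i - m))).add w4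
  rwa [show i + (k - i - m) + m = k by omega] at w5
end
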